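/- arXiv:2310.09889 — 2 statements merged into one kernel-verified Lean document; each statement's English description precedes it below -/
import Mathlib

section
/- For every k ∈ [K], every vector a_V with V an S-element subset of [K] lies in the F-linear span of the set of vectors { a_{V'} : V' an S-element subset of [K] with k ∈ V' }. -/
/-- The `i`-th smallest element (1-indexed) of a finite set of naturals,
i.e. `V(i)` for a finite set `V` of integers. -/
def nthSmallest (V : Finset ℕ) (i : ℕ) : ℕ :=
  (V.sort (· ≤ ·)).getD (i - 1) 0

/-!
Let `o` be the distinguished element (`1` in the theorem). Given a set `U` that contains `o` but
not `k`, exchange `o` for `k` to get `W`. In the relation for `W` the left-hand side and all terms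
but the one removing `k` are vectors of sets containing `k`, while the remaining term is a unit
multiple of `a U`; hence `a U` lies in the span. The relation for a set avoiding `o` expresses its
vector through vectors of sets containing `o`, which are already in the span.
-/

section Exchange

variable {α : Type*} [DecidableEq α] {V : Finset α} {x y : α}

theorem coe_insert_erase_subset {X : Set α} (hy : y ∈ X) (hV : ↑V ⊆ X) :
    ↑(insert y (V.erase x)) ⊆ X := by
  rw [Finset.coe_insert]
  exact Set.insert_subset hy ((Finset.coe_subset.2 (V.erase_subset x)).trans hV)

theorem card_insert_erase (hx : x ∈ V) (hy : y ∉ V) : (insert y (V.erase x)).card = V.card := by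
  rw [Finset.card_insert_of_notMem (mt Finset.mem_of_mem_erase hy), Finset.card_erase_add_one hx]

theorem insert_erase_insert_erase (hx : x ∈ V) (hy : y ∉ V) :
    insert x ((insert y (V.erase x)).erase y) = V := by
  rw [Finset.erase_insert (mt Finset.mem_of_mem_erase hy), Finset.insert_erase hx]

end Exchange

section Span

variable {R M : Type*} [Ring R] [AddCommGroup M] [Module R M] {N : Submodule R M}

theorem mem_of_sum_units_smul_mem {ι : Type*} {s : Finset ι} {c : ι → Rˣ} {v : ι → M} {k : ι}
    (hsum : ∑ i ∈ s, c i • v i ∈ N) (hk : k ∈ s) (hv : ∀ i ∈ s, i ≠ k → v i ∈ N) : v k ∈ N := by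
  classical
  have hrest : ∑ i ∈ s.erase k, c i • v i ∈ N := N.sum_mem fun i hi ↦
    (N.smul_mem_iff' (c i)).2 (hv i (Finset.mem_of_mem_erase hi) (Finset.ne_of_mem_erase hi))
  rw [← Finset.add_sum_erase s _ hk, N.add_mem_iff_left hrest] at hsum
  exact (N.smul_mem_iff' (c k)).1 hsum

variable {α : Type*} [DecidableEq α] {X : Set α} {S : ℕ} {o k : α} {c : Finset α → α → Rˣ}
  {a : Finset α → M}

theorem mem_of_exchange_relation_of_mem (hk : k ∈ X)
    (ha : ∀ V : Finset α, ↑V ⊆ X → V.card = S → o ∉ V →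
      a V = ∑ x ∈ V, c V x • a (insert o (V.erase x)))
    (hN : ∀ V : Finset α, ↑V ⊆ X → V.card = S → k ∈ V → a V ∈ N)
    {U : Finset α} (hU : ↑U ⊆ X) (hUcard : U.card = S) (ho : o ∈ U) : a U ∈ N := by
  by_cases hkU : k ∈ U
  · exact hN U hU hUcard hkU
  let W := insert k (U.erase o)
  have hW : ↑W ⊆ X := coe_insert_erase_subset hk hU
  have hWcard : W.card = S := (card_insert_erase ho hkU).trans hUcard
  have hkW : k ∈ W := Finset.mem_insert_self k _
  have hoW : o ∉ W := by
    simp only [W, Finset.mem_insert, Finset.notMem_erase, or_false]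
    exact ne_of_mem_of_not_mem ho hkU
  have hsum : ∑ x ∈ W, c W x • a (insert o (W.erase x)) ∈ N :=
    ha W hW hWcard hoW ▸ hN W hW hWcard hkW
  rw [← insert_erase_insert_erase ho hkU]
  refine mem_of_sum_units_smul_mem (v := fun x ↦ a (insert o (W.erase x))) hsum hkW
    fun x hx hxk ↦ ?_
  exact hN _ (coe_insert_erase_subset (hU ho) hW) ((card_insert_erase hx hoW).trans hWcard)
    (Finset.mem_insert_of_mem (Finset.mem_erase_of_ne_of_mem hxk.symm hkW))

theorem span_from_one_user_general (ho : o ∈ X) (hk : k ∈ X)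
    (ha : ∀ V : Finset α, ↑V ⊆ X → V.card = S → o ∉ V →
      a V = ∑ x ∈ V, c V x • a (insert o (V.erase x)))
    {V : Finset α} (hV : ↑V ⊆ X) (hVcard : V.card = S) :
    a V ∈ Submodule.span R
      {v : M | ∃ V' : Finset α, ↑V' ⊆ X ∧ V'.card = S ∧ k ∈ V' ∧ a V' = v} := by
  set N := Submodule.span R
    {v : M | ∃ V' : Finset α, ↑V' ⊆ X ∧ V'.card = S ∧ k ∈ V' ∧ a V' = v}
  have mem_of_mem_k (U : Finset α) (hU : ↑U ⊆ X) (hUcard : U.card = S) (hkU : k ∈ U) : a U ∈ N :=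
    Submodule.subset_span ⟨U, hU, hUcard, hkU, rfl⟩
  have mem_of_mem_o (U : Finset α) (hU : ↑U ⊆ X) (hUcard : U.card = S) (hoU : o ∈ U) : a U ∈ N :=
    mem_of_exchange_relation_of_mem hk ha mem_of_mem_k hU hUcard hoU
  by_cases hoV : o ∈ V
  · exact mem_of_mem_o V hV hVcard hoV
  rw [ha V hV hVcard hoV]
  refine N.sum_mem fun x hx ↦ (N.smul_mem_iff' (c V x)).2 ?_
  exact mem_of_mem_o _ (coe_insert_erase_subset ho hV) ((card_insert_erase hx hoV).trans hVcard)
    (Finset.mem_insert_self o _)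

end Span

section NthSmallest

variable {V : Finset ℕ}

theorem toFinset_ofPred_mem (hfin : (Set.ofPred (· ∈ V)).Finite) : hfin.toFinset = V :=
  V.finite_toSet_toFinset

theorem nthSmallest_eq_nth (V : Finset ℕ) (i : ℕ) :
    nthSmallest V i = Nat.nth (· ∈ V) (i - 1) := by
  have hfin : (Set.ofPred (· ∈ V)).Finite := V.finite_toSet
  rw [nthSmallest, Nat.nth_eq_getD_sort hfin, toFinset_ofPred_mem]

theorem sub_one_lt_card_toFinset {i : ℕ} (hi : i ∈ Finset.Icc 1 V.card)
    (hfin : (Set.ofPred (· ∈ V)).Finite) : i - 1 < hfin.toFinset.card := by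
  rw [Finset.mem_Icc] at hi
  rw [toFinset_ofPred_mem]
  lia

theorem nthSmallest_mem {i : ℕ} (hi : i ∈ Finset.Icc 1 V.card) : nthSmallest V i ∈ V := by
  rw [nthSmallest_eq_nth]
  exact Nat.nth_mem _ (sub_one_lt_card_toFinset hi)

theorem count_nthSmallest {i : ℕ} (hi : i ∈ Finset.Icc 1 V.card) :
    Nat.count (· ∈ V) (nthSmallest V i) = i - 1 := by
  rw [nthSmallest_eq_nth, Nat.count_nth (sub_one_lt_card_toFinset hi)]

theorem nthSmallest_count_add_one {x : ℕ} (hx : x ∈ V) :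
    nthSmallest V (Nat.count (· ∈ V) x + 1) = x := by
  rw [nthSmallest_eq_nth, Nat.add_sub_cancel, Nat.nth_count hx]

theorem count_mem_lt_card {x : ℕ} (hx : x ∈ V) : Nat.count (· ∈ V) x < V.card := by
  have hfin : (Set.ofPred (· ∈ V)).Finite := V.finite_toSet
  simpa only [toFinset_ofPred_mem] using Nat.count_lt_card hfin hx

theorem sum_Icc_nthSmallest {M : Type*} [AddCommMonoid M] (V : Finset ℕ) (f : ℕ → ℕ → M) :
    ∑ i ∈ Finset.Icc 1 V.card, f (i - 1) (nthSmallest V i) =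
      ∑ x ∈ V, f (Nat.count (· ∈ V) x) x := by
  refine Finset.sum_nbij' (nthSmallest V) (Nat.count (· ∈ V) · + 1) (fun i ↦ nthSmallest_mem)
    (fun x hx ↦ ?_) (fun i hi ↦ ?_) (fun x ↦ nthSmallest_count_add_one) (fun i hi ↦ ?_)
  · exact Finset.mem_Icc.2 ⟨Nat.le_add_left 1 _, count_mem_lt_card hx⟩
  · rw [count_nthSmallest hi, Nat.sub_add_cancel (Finset.mem_Icc.1 hi).1]
  · rw [count_nthSmallest hi]

theorem eq_sum_count_smul_of_eq_sum_nthSmallest {R M : Type*} [Ring R] [AddCommGroup M]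
    [Module R M] {K S : ℕ} {a : Finset ℕ → M}
    (ha : ∀ V : Finset ℕ, V ⊆ Finset.Icc 2 K → V.card = S →
      a V = ∑ i ∈ Finset.Icc 1 S,
        ((-1 : R) ^ (i - 1)) • a (insert 1 (V.erase (nthSmallest V i))))
    (V : Finset ℕ) (hV : V ⊆ Finset.Icc 1 K) (hVcard : V.card = S) (h1 : 1 ∉ V) :
    a V = ∑ x ∈ V, ((-1 : Rˣ) ^ Nat.count (· ∈ V) x) • a (insert 1 (V.erase x)) := by
  have hV2 : V ⊆ Finset.Icc 2 K := by grind
  rw [ha V hV2 hVcard, ← hVcard,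
    sum_Icc_nthSmallest V fun n x ↦ ((-1 : R) ^ n) • a (insert 1 (V.erase x))]
  simp only [Units.smul_def, Units.val_pow_eq_pow_val, Units.val_neg, Units.val_one]

end NthSmallest

/-- For every `k ∈ [K]`, every vector `a_V` (`V` an `S`-element subset of `[K]`) lies in
the `F`-linear span of `{a_{V'} : V'` an `S`-element subset of `[K]` with `k ∈ V'}`. -/
theorem span_from_one_user
    (K S : ℕ) (hS : 2 ≤ S) (hSK : S ≤ K)
    (F : Type*) [Field F] (M : Type*) [AddCommGroup M] [Module F M]
    (a : Finset ℕ → M)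
    (ha : ∀ V : Finset ℕ, V ⊆ Finset.Icc 2 K → V.card = S →
      a V = ∑ i ∈ Finset.Icc 1 S,
        ((-1 : F) ^ (i - 1)) • a (insert 1 (V.erase (nthSmallest V i))))
    (k : ℕ) (hk : k ∈ Finset.Icc 1 K)
    (V : Finset ℕ) (hV : V ⊆ Finset.Icc 1 K) (hVcard : V.card = S) :
    a V ∈ Submodule.span F
      {v : M | ∃ V' : Finset ℕ, V' ⊆ Finset.Icc 1 K ∧ V'.card = S ∧ k ∈ V' ∧ a V' = v} := by
  simpa only [Finset.coe_subset] using span_from_one_user_general (X := Finset.Icc 1 K)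
    (Finset.mem_coe.2 (Finset.left_mem_Icc.2 (by lia))) hk
    (fun W hW ↦ eq_sum_count_smul_of_eq_sum_nthSmallest ha W (Finset.coe_subset.1 hW))
    (Finset.coe_subset.2 hV) hVcard
end

section
/- For every k ∈ [K] and every k' ∈ [K] with k' ≠ k, the F-linear span of { a_V : V an S-element subset of [K] \ {k} } equals the F-linear span of the subfamily { a_V : V an S-element subset of [K] \ {k} with k' ∈ V }. -/
/-!
Regard `a` as a cochain on the simplex with vertex set `{1, …, K}`, with simplicial coboundary
`(δ a) W = ∑ ± a (W \ {w})`. The hypothesis says that `a` agrees with the coboundary of its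
contraction `T ↦ a (T ∪ {1})` on the sets avoiding `1`. Since `δ ∘ δ = 0`, the coboundary `δ a`
vanishes on sets avoiding `1`; on sets containing `1` this vanishing is the hypothesis itself.
If `k' ∉ V`, the relation `(δ a) (V ∪ {k'}) = 0` then expresses `± a V` through values of `a` at
sets which contain `k'` and still avoid `k`.
-/

section Coboundary

variable {α M : Type*} [LinearOrder α] [AddCommGroup M]

/-- The incidence number `±1` of the face `V \ {w}` in the simplex `V`. For `w ∈ V` the
exponent is the position of `w` in increasing order, counted from `0`. -/
def faceSign (V : Finset α) (w : α) : ℤ :=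
  (-1) ^ (V.filter (· < w)).card

/-- The simplicial coboundary of a cochain `f`, evaluated at the simplex `V`. Cochains of all
degrees are treated at once, as functions on all finite sets of vertices. -/
def coboundary (f : Finset α → M) (V : Finset α) : M :=
  ∑ w ∈ V, faceSign V w • f (V.erase w)

lemma faceSign_eq_one_or_eq_neg_one (V : Finset α) (w : α) :
    faceSign V w = 1 ∨ faceSign V w = -1 :=
  neg_one_pow_eq_or ℤ _

lemma faceSign_eq_one_of_forall_le {V : Finset α} {w : α} (hw : ∀ x ∈ V, w ≤ x) :
    faceSign V w = 1 := by
  rw [faceSign, Finset.filter_false_of_mem fun x hx ↦ (hw x hx).not_gt, Finset.card_empty,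
    pow_zero]

lemma faceSign_erase_of_le {u w : α} (V : Finset α) (huw : u ≤ w) :
    faceSign (V.erase w) u = faceSign V u := by
  rw [faceSign, faceSign, Finset.filter_erase, Finset.erase_eq_of_notMem]
  simp [huw]

lemma faceSign_erase_of_lt {V : Finset α} {u w : α} (hw : w ∈ V) (hwu : w < u) :
    faceSign (V.erase w) u = -faceSign V u := by
  have hmem : w ∈ V.filter (· < u) := Finset.mem_filter.2 ⟨hw, hwu⟩
  rw [faceSign, faceSign, Finset.filter_erase, ← Finset.card_erase_add_one hmem, pow_succ,
    mul_neg_one, neg_neg]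

lemma faceSign_mul_faceSign_erase {V : Finset α} {u w : α} (hu : u ∈ V) (hw : w ∈ V)
    (huw : u ≠ w) :
    faceSign V w * faceSign (V.erase w) u = -(faceSign V u * faceSign (V.erase u) w) := by
  rcases huw.lt_or_gt with h | h
  · rw [faceSign_erase_of_le V h.le, faceSign_erase_of_lt hu h]
    ring
  · rw [faceSign_erase_of_lt hw h, faceSign_erase_of_le V h.le]
    ring

lemma faceSign_orderEmbOfFin (V : Finset α) {n : ℕ} (hV : V.card = n) (i : Fin n) :
    faceSign V (V.orderEmbOfFin hV i) = (-1) ^ (i : ℕ) := by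
  have hbelow : V.filter (· < V.orderEmbOfFin hV i) =
      (Finset.Iio i).map (V.orderEmbOfFin hV).toEmbedding := by
    conv_lhs => enter [2]; rw [← V.map_orderEmbOfFin_univ hV]
    rw [Finset.filter_map]
    congr 1
    ext j
    simp
  rw [faceSign, hbelow, Finset.card_map, Fin.card_Iio]

lemma coboundary_eq_sum_fin (f : Finset α → M) (V : Finset α) {n : ℕ} (hV : V.card = n) :
    coboundary f V = ∑ i : Fin n, (-1 : ℤ) ^ (i : ℕ) • f (V.erase (V.orderEmbOfFin hV i)) := by
  conv_lhs => rw [coboundary, ← Finset.sum_coe_sort, ← (V.orderIsoOfFin hV).toEquiv.sum_comp]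
  simp only [RelIso.coe_fn_toEquiv, Finset.coe_orderIsoOfFin_apply, faceSign_orderEmbOfFin]

theorem coboundary_coboundary (f : Finset α → M) (V : Finset α) :
    coboundary (coboundary f) V = 0 := by
  simp only [coboundary, Finset.smul_sum, smul_smul]
  rw [Finset.sum_sigma']
  have mem_pairs {p : Σ _ : α, α} (hp : p ∈ V.sigma fun w ↦ V.erase w) :
      p.1 ∈ V ∧ p.2 ≠ p.1 ∧ p.2 ∈ V := by
    simpa using hp
  -- Removing `w` then `u` leaves the same set as removing `u` then `w`, with the opposite sign.
  refine Finset.sum_involution (fun p _ ↦ ⟨p.2, p.1⟩) ?cancel ?no_fixed_point ?mem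
    fun _ _ ↦ rfl
  case cancel =>
    rintro ⟨w, u⟩ hp
    obtain ⟨hw, huw, hu⟩ := mem_pairs hp
    dsimp only
    rw [faceSign_mul_faceSign_erase hu hw huw, Finset.erase_right_comm, neg_smul, neg_add_cancel]
  case no_fixed_point =>
    intro p hp _ hfix
    exact (mem_pairs hp).2.1 (congrArg Sigma.fst hfix)
  case mem =>
    intro p hp
    obtain ⟨hw, huw, hu⟩ := mem_pairs hp
    simpa using ⟨hu, huw.symm, hw⟩

lemma coboundary_insert_of_forall_lt (f : Finset α → M) {V : Finset α} {b : α}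
    (hb : ∀ x ∈ V, b < x) :
    coboundary f (insert b V) = f V - coboundary (fun T ↦ f (insert b T)) V := by
  have hbV : b ∉ V := fun h ↦ (hb b h).false
  have hsign_b : faceSign (insert b V) b = 1 :=
    faceSign_eq_one_of_forall_le <|
      Finset.forall_mem_insert .. |>.2 ⟨le_rfl, fun x hx ↦ (hb x hx).le⟩
  have hsign (w : α) (hw : w ∈ V) : faceSign (insert b V) w = -faceSign V w := by
    have h := faceSign_erase_of_lt (Finset.mem_insert_self b V) (hb w hw)
    rw [Finset.erase_insert hbV] at h
    rw [h, neg_neg]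
  rw [coboundary, Finset.sum_insert hbV, hsign_b, one_smul, Finset.erase_insert hbV,
    sub_eq_add_neg, coboundary, ← Finset.sum_neg_distrib]
  congr 1
  refine Finset.sum_congr rfl fun w hw ↦ ?_
  rw [hsign w hw, neg_smul, Finset.erase_insert_of_ne (hb w hw).ne]

theorem coboundary_eq_zero_of_eq_coboundary_insert {f : Finset α → M} {W : Finset α} {b : α}
    (hb : ∀ x ∈ W, b ≤ x)
    (hf : ∀ w ∈ W, b ∉ W.erase w →
      f (W.erase w) = coboundary (fun T ↦ f (insert b T)) (W.erase w)) :
    coboundary f W = 0 := by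
  by_cases hbW : b ∈ W
  · have hlt : ∀ x ∈ W.erase b, b < x := fun x hx ↦
      (hb x (Finset.mem_of_mem_erase hx)).lt_of_ne (Finset.ne_of_mem_erase hx).symm
    rw [← Finset.insert_erase hbW, coboundary_insert_of_forall_lt f hlt,
      ← hf b hbW (Finset.notMem_erase b W), sub_self]
  · have hfaces : coboundary f W = coboundary (coboundary fun T ↦ f (insert b T)) W :=
      Finset.sum_congr rfl fun w hw ↦ by
        rw [hf w hw fun h ↦ hbW (Finset.mem_of_mem_erase h)]
    rw [hfaces, coboundary_coboundary]

lemma apply_erase_mem_of_coboundary_eq_zero {σ : Type*} [SetLike σ M]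
    [AddSubgroupClass σ M] {N : σ} {f : Finset α → M} {W : Finset α} {c : α} (hc : c ∈ W)
    (hW : coboundary f W = 0) (hN : ∀ w ∈ W.erase c, f (W.erase w) ∈ N) :
    f (W.erase c) ∈ N := by
  rw [coboundary, ← Finset.add_sum_erase W _ hc] at hW
  have hmem : faceSign W c • f (W.erase c) ∈ N := by
    rw [eq_neg_of_add_eq_zero_left hW]
    exact neg_mem (sum_mem fun w hw ↦ zsmul_mem (hN w hw) _)
  rcases faceSign_eq_one_or_eq_neg_one W c with hsign | hsign
  · rwa [hsign, one_smul] at hmem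
  · rwa [hsign, neg_one_smul, neg_mem_iff] at hmem

theorem span_eq_span_containing_general {R : Type*} [Ring R] [Module R M] {S : ℕ}
    {a : Finset α → M} {U : Set α} {b c : α} (hb : b ∈ lowerBounds U)
    (ha : ∀ V : Finset α, ↑V ⊆ U \ {b} → V.card = S →
      a V = coboundary (fun T ↦ a (insert b T)) V)
    (hc : c ∈ U) :
    Submodule.span R {v : M | ∃ V : Finset α, ↑V ⊆ U ∧ V.card = S ∧ a V = v} =
      Submodule.span R {v : M | ∃ V : Finset α, ↑V ⊆ U ∧ V.card = S ∧ c ∈ V ∧ a V = v} := by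
  refine le_antisymm (Submodule.span_le.2 ?_) (Submodule.span_mono ?_)
  · rintro _ ⟨V, hVU, hVS, rfl⟩
    by_cases hcV : c ∈ V
    · exact Submodule.subset_span ⟨V, hVU, hVS, hcV, rfl⟩
    have hWU : ∀ x ∈ insert c V, x ∈ U := Finset.forall_mem_insert .. |>.2 ⟨hc, hVU⟩
    have hface_card (w : α) (hw : w ∈ insert c V) : ((insert c V).erase w).card = S := by
      rw [Finset.card_erase_of_mem hw, Finset.card_insert_of_notMem hcV, hVS, Nat.add_sub_cancel]
    have hcocycle : coboundary a (insert c V) = 0 :=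
      coboundary_eq_zero_of_eq_coboundary_insert (fun x hx ↦ hb (hWU x hx)) fun w hw hbw ↦
        ha _ (fun x hx ↦ ⟨hWU x (Finset.mem_of_mem_erase hx), fun hxb ↦ hbw (hxb ▸ hx)⟩)
          (hface_card w hw)
    rw [← Finset.erase_insert hcV]
    refine apply_erase_mem_of_coboundary_eq_zero (Finset.mem_insert_self c V) hcocycle
      fun w hw ↦ Submodule.subset_span ⟨_, fun x hx ↦ hWU x (Finset.mem_of_mem_erase hx),
        hface_card w (Finset.mem_of_mem_erase hw), ?_, rfl⟩
    exact Finset.mem_erase.2 ⟨(Finset.ne_of_mem_erase hw).symm, Finset.mem_insert_self c V⟩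
  · rintro _ ⟨V, hVU, hVS, -, rfl⟩
    exact ⟨V, hVU, hVS, rfl⟩

end Coboundary

lemma nthSmallest_one_add (V : Finset ℕ) {n : ℕ} (hV : V.card = n) (i : Fin n) :
    nthSmallest V (1 + i) = V.orderEmbOfFin hV i := by
  rw [nthSmallest, Finset.orderEmbOfFin_apply, Nat.add_sub_cancel_left, List.getD_eq_getElem]
  rfl

lemma sum_smul_erase_nthSmallest (R : Type*) {M : Type*} [Ring R] [AddCommGroup M] [Module R M]
    (f : Finset ℕ → M) {V : Finset ℕ} {n : ℕ} (hV : V.card = n) :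
    ∑ i ∈ Finset.Icc 1 n, (-1 : R) ^ (i - 1) • f (V.erase (nthSmallest V i)) =
      coboundary f V := by
  rw [coboundary_eq_sum_fin f V hV, ← Finset.Ico_add_one_right_eq_Icc,
    Finset.sum_Ico_eq_sum_range, Nat.add_sub_cancel, Finset.sum_range]
  refine Finset.sum_congr rfl fun i _ ↦ ?_
  rw [nthSmallest_one_add V hV, Nat.add_sub_cancel_left, ← Int.cast_smul_eq_zsmul R,
    Int.cast_pow, Int.cast_neg, Int.cast_one]

/-- For `k, k' ∈ [K]` with `k' ≠ k`, the span of `{a_V : V` an `S`-element subset of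
`[K] \ {k}}` equals the span of the subfamily of those `V` additionally containing `k'`. -/
theorem span_eq_span_containing
    (K S : ℕ) (hS : 2 ≤ S) (hSK : S ≤ K)
    (F : Type*) [Field F] (M : Type*) [AddCommGroup M] [Module F M]
    (a : Finset ℕ → M)
    (ha : ∀ V : Finset ℕ, V ⊆ Finset.Icc 2 K → V.card = S →
      a V = ∑ i ∈ Finset.Icc 1 S,
        ((-1 : F) ^ (i - 1)) • a (insert 1 (V.erase (nthSmallest V i))))
    (k k' : ℕ) (hk : k ∈ Finset.Icc 1 K) (hk' : k' ∈ Finset.Icc 1 K) (hkk' : k' ≠ k) :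
    Submodule.span F
        {v : M | ∃ V : Finset ℕ, V ⊆ (Finset.Icc 1 K).erase k ∧ V.card = S ∧ a V = v} =
      Submodule.span F
        {v : M | ∃ V : Finset ℕ,
          V ⊆ (Finset.Icc 1 K).erase k ∧ V.card = S ∧ k' ∈ V ∧ a V = v} := by
  have hmin : 1 ∈ lowerBounds (↑((Finset.Icc 1 K).erase k) : Set ℕ) := fun x hx ↦
    (Finset.mem_Icc.1 (Finset.mem_of_mem_erase hx)).1
  exact mod_cast span_eq_span_containing_general hmin
    (fun V hVU hVS ↦ (ha V (fun x hx ↦ by grind [hVU hx]) hVS).trans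
      (sum_smul_erase_nthSmallest F (fun T ↦ a (insert 1 T)) hVS))
    (Finset.mem_erase.2 ⟨hkk', hk'⟩)
end
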